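/- arXiv:1406.5361 — 3 statements merged into one kernel-verified Lean document; each statement's English description precedes it below -/
import Mathlib

section
/- Let k be a field of characteristic zero, P = k[x,y,z,t], and S = k[x,y,z] ⊆ P. Let I ⊆ P be a homogeneous ideal, let d ≥ 1, and let ℓ ∈ S_1 be a linear form in x, y, z only that is a nonzerodivisor on P/I. Assume that for every f in the degree-d component I_d one has ℓ·(∂f/∂t) ∈ I_d. Then for every f ∈ I_d, writing f = f^0 + t·f^1 + ⋯ + t^d·f^d with f^i ∈ S_{d-i}, the t-free part f^0 (i.e., f with t replaced by 0) also belongs to I_d. -/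
open MvPolynomial

/-!
The Euler operator `E = t ∂/∂t` acts on the monomials of `t`-degree `m` as multiplication by `m`,
so `(1 - E)(2 - E)⋯(d - E)`, the `d`-th rising factorial of `1 - E`, kills every monomial of
`t`-degree between `1` and `d` and multiplies the `t`-free ones by `d!`. It therefore sends a form
`f` of degree `d` to `d! • f⁰`. Since `ℓ` is a nonzerodivisor modulo `I`, the hypothesis says that
`E` preserves `I_d`, hence so does every polynomial in `E`, and `f⁰ ∈ I_d` as soon as `d!` is
invertible.
-/

open scoped Nat

section CommSemiring

variable {σ R : Type*} [CommSemiring R]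

/-- The Euler operator `X i * ∂/∂X i` in the single variable `X i`, as an `R`-linear endomorphism,
so that polynomials can be evaluated at it. -/
noncomputable def eulerOperator (i : σ) : Module.End R (MvPolynomial σ R) :=
  LinearMap.mulLeft R (X i) ∘ₗ (pderiv i).toLinearMap

theorem eulerOperator_apply (i : σ) (f : MvPolynomial σ R) :
    eulerOperator i f = X i * pderiv i f :=
  rfl

theorem coeff_eulerOperator (i : σ) (f : MvPolynomial σ R) (m : σ →₀ ℕ) :
    coeff m (eulerOperator i f) = m i * coeff m f := by
  classical
  induction f using MvPolynomial.induction_on' with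
  | monomial u a =>
    rw [eulerOperator_apply, X_mul_pderiv_monomial, coeff_smul, coeff_monomial, nsmul_eq_mul]
    split_ifs with h
    · rw [h]
    · simp only [mul_zero]
  | add p q hp hq => rw [map_add, coeff_add, hp, hq, coeff_add, mul_add]

theorem coeff_aeval_eulerOperator (i : σ) (p : Polynomial R) (f : MvPolynomial σ R)
    (m : σ →₀ ℕ) :
    coeff m (Polynomial.aeval (eulerOperator i) p f) = p.eval (m i : R) * coeff m f := by
  induction p using Polynomial.induction_on with
  | C a => simp
  | add p q hp hq => simp [hp, hq, add_mul]
  | monomial n a ih =>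
    rw [pow_succ, ← mul_assoc, Polynomial.eval_mul_X, mul_comm, map_mul, Module.End.mul_apply,
      Polynomial.aeval_X, coeff_eulerOperator, ih]
    ring

theorem isHomogeneous_eulerOperator {d : ℕ} {f : MvPolynomial σ R} (hf : f.IsHomogeneous d)
    (i : σ) : (eulerOperator i f).IsHomogeneous d := by
  intro m hm
  rw [coeff_eulerOperator] at hm
  exact hf (right_ne_zero_of_mul hm)

variable [DecidableEq σ]

/-- The substitution `X i ↦ 0`, which maps a polynomial `f` to its `X i`-free part `f⁰`, regarded
as an element of the same polynomial ring. -/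
noncomputable def setVarZero (i : σ) : MvPolynomial σ R →ₐ[R] MvPolynomial σ R :=
  aeval fun j => if j = i then 0 else X j

theorem setVarZero_monomial (i : σ) (u : σ →₀ ℕ) (a : R) :
    setVarZero i (monomial u a) = if u i = 0 then monomial u a else 0 := by
  rw [setVarZero, aeval_monomial]
  split_ifs with hu
  · rw [algebraMap_eq, monomial_eq]
    congr 1
    refine Finsupp.prod_congr fun j hj => ?_
    have hji : j ≠ i := fun h => Finsupp.mem_support_iff.mp hj (h ▸ hu)
    rw [if_neg hji]
  · rw [Finsupp.prod, Finset.prod_eq_zero (Finsupp.mem_support_iff.mpr hu), mul_zero]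
    rw [if_pos rfl, zero_pow hu]

theorem coeff_setVarZero (i : σ) (f : MvPolynomial σ R) (m : σ →₀ ℕ) :
    coeff m (setVarZero i f) = if m i = 0 then coeff m f else 0 := by
  induction f using MvPolynomial.induction_on' with
  | monomial u a =>
    rw [setVarZero_monomial, apply_ite (coeff m), coeff_zero, coeff_monomial]
    grind
  | add p q hp hq => rw [map_add, coeff_add, hp, hq, coeff_add, ite_add_zero]

end CommSemiring

section CommRing

variable {σ R : Type*} [CommRing R]

theorem eval_ascPochhammer_one_sub_natCast {n d : ℕ} (h : n ≤ d) :
    (ascPochhammer R d).eval (1 - (n : R)) = if n = 0 then (d ! : R) else 0 := by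
  cases n with
  | zero => simp [ascPochhammer_eval_one]
  | succ j =>
    have hj : 1 - ((j + 1 : ℕ) : R) = -(j : R) := by push_cast; ring
    rw [hj, ascPochhammer_eval_neg_coe_nat_of_lt h, if_neg j.succ_ne_zero]

variable [DecidableEq σ]

theorem aeval_eulerOperator_ascPochhammer_comp {i : σ} {d : ℕ} {f : MvPolynomial σ R}
    (hf : f.degreeOf i ≤ d) :
    Polynomial.aeval (eulerOperator i) ((ascPochhammer R d).comp (1 - Polynomial.X)) f =
      (d ! : R) • setVarZero i f := by
  ext m
  rw [coeff_aeval_eulerOperator, coeff_smul, coeff_setVarZero, Polynomial.eval_comp,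
    Polynomial.eval_sub, Polynomial.eval_one, Polynomial.eval_X, smul_eq_mul]
  by_cases hm : coeff m f = 0
  · simp [hm]
  · have hmd : m i ≤ d := (monomial_le_degreeOf i (mem_support_iff.mpr hm)).trans hf
    rw [eval_ascPochhammer_one_sub_natCast hmd, ite_mul, zero_mul, mul_ite, mul_zero]

theorem setVarZero_mem_of_mem_invtSubmodule {W : Submodule R (MvPolynomial σ R)} {i : σ}
    (hW : W ∈ (eulerOperator i).invtSubmodule) {d : ℕ} (hd : IsUnit (d ! : R))
    {f : MvPolynomial σ R} (hf : f ∈ W) (hfd : f.degreeOf i ≤ d) :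
    setVarZero i f ∈ W := by
  rw [← W.smul_mem_iff_of_isUnit hd, ← aeval_eulerOperator_ascPochhammer_comp hfd]
  exact Polynomial.aeval_apply_smul_mem_of_le_comap hf _ _ hW

theorem stmt_1_general {I : Ideal (MvPolynomial σ R)} {d : ℕ} (hd : IsUnit (d ! : R)) {i : σ}
    {ℓ : MvPolynomial σ R} (hreg : ∀ g, ℓ * g ∈ I → g ∈ I)
    (hder : ∀ f ∈ I, f ∈ homogeneousSubmodule σ R d → ℓ * pderiv i f ∈ I)
    {f : MvPolynomial σ R} (hf : f ∈ I) (hfd : f ∈ homogeneousSubmodule σ R d) :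
    setVarZero i f ∈ I ∧ setVarZero i f ∈ homogeneousSubmodule σ R d := by
  let W : Submodule R (MvPolynomial σ R) := I.restrictScalars R ⊓ homogeneousSubmodule σ R d
  have hW : W ∈ (eulerOperator i).invtSubmodule := fun g ⟨hg, hgd⟩ =>
    ⟨I.mul_mem_left (X i) (hreg _ (hder g hg hgd)), isHomogeneous_eulerOperator hgd i⟩
  have hdeg : f.degreeOf i ≤ d := (degreeOf_le_totalDegree f i).trans hfd.totalDegree_le
  exact setVarZero_mem_of_mem_invtSubmodule hW hd ⟨hf, hfd⟩ hdeg

end CommRing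

/-- Let `P = k[x,y,z,t]` (char `k` = 0), `I ⊆ P` a homogeneous ideal,
`d ≥ 1`, and let `ℓ` be a linear form in `x, y, z` only (variables `0, 1, 2`) which is a
nonzerodivisor on `P/I`.  If `ℓ·(∂f/∂t) ∈ I_d` for every `f ∈ I_d`, then for every
`f ∈ I_d` the `t`-free part `f⁰` (i.e. `f` with `t` replaced by `0`) also lies in `I_d`.
Here the variable `t` is `X 3`. -/
theorem stmt_1 {k : Type*} [Field k] [CharZero k]
    (I : Ideal (MvPolynomial (Fin 4) k))
    (hIhom : ∀ f ∈ I, ∀ n : ℕ, homogeneousComponent n f ∈ I)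
    (d : ℕ) (hd : 1 ≤ d)
    (ℓ : MvPolynomial (Fin 4) k)
    (hℓ1 : ℓ ∈ homogeneousSubmodule (Fin 4) k 1)
    (hℓt : (3 : Fin 4) ∉ ℓ.vars)
    (hreg : ∀ g : MvPolynomial (Fin 4) k, ℓ * g ∈ I → g ∈ I)
    (hder : ∀ f ∈ I, f ∈ homogeneousSubmodule (Fin 4) k d →
      ℓ * pderiv (3 : Fin 4) f ∈ I) :
    ∀ f ∈ I, f ∈ homogeneousSubmodule (Fin 4) k d →
      aeval (fun i : Fin 4 => if i = 3 then (0 : MvPolynomial (Fin 4) k) else X i) f ∈ I ∧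
      aeval (fun i : Fin 4 => if i = 3 then (0 : MvPolynomial (Fin 4) k) else X i) f ∈
        homogeneousSubmodule (Fin 4) k d :=
  fun _ hf hfd =>
    stmt_1_general (Nat.cast_ne_zero.mpr d.factorial_ne_zero).isUnit hreg hder hf hfd
end

section
/- Let k be a field of characteristic zero, S = k[x,y,z,t], and d ≥ 1. Suppose ψ : S_d → S_d is a k-linear endomorphism such that for all linearly independent linear forms ℓ, h ∈ S_1 one has ψ(ℓ·S_{d-1} + h·S_{d-1}) ⊆ ℓ·S_{d-1} + h·S_{d-1}. Then there is a scalar α ∈ k such that ψ(f) = α·f for all f ∈ S_d. -/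
open MvPolynomial

/-!
Let `p` be a point with `p i ≠ 0`. Up to the factor `p i ^ d`, a form of degree `d` vanishing at `p`
is a sum of forms in the ideals generated by pairs of the linear forms `p i * X j - p j * X i`, so
`f(p) = 0` implies `(ψ f)(p) = 0`. Applied to `f(p) • g - g(p) • f`, this gives `f * ψ g = g * ψ f`
at `p`, hence identically because the base ring is infinite. Since `X i ^ d` and `X j ^ d` are
coprime, `X i ^ d` then divides `ψ (X i ^ d)`; the quotient has degree zero, and is the scalar.
-/

section GradedRing

open DirectSum

variable {ι R A : Type*} [DecidableEq ι] [AddRightCancelMonoid ι] [CommSemiring R]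
  [CommSemiring A] [Algebra R A] (𝒜 : ι → Submodule R A) [GradedAlgebra 𝒜]

lemma mem_span_pair_iff_mem_sup_map_mulLeft {i j : ι} {a b f : A} (ha : a ∈ 𝒜 j) (hb : b ∈ 𝒜 j)
    (hf : f ∈ 𝒜 (i + j)) :
    f ∈ Ideal.span {a, b} ↔
      f ∈ (𝒜 i).map (LinearMap.mulLeft R a) ⊔ (𝒜 i).map (LinearMap.mulLeft R b) := by
  simp only [Ideal.mem_span_pair, Submodule.mem_sup, Submodule.mem_map, LinearMap.mulLeft_apply]
  constructor
  · rintro ⟨u, v, huv⟩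
    refine ⟨_, ⟨decompose 𝒜 u i, SetLike.coe_mem _, rfl⟩,
      _, ⟨decompose 𝒜 v i, SetLike.coe_mem _, rfl⟩, ?_⟩
    calc a * decompose 𝒜 u i + b * decompose 𝒜 v i
        = decompose 𝒜 (u * a + v * b) (i + j) := by
          rw [decompose_add, DirectSum.add_apply, Submodule.coe_add,
            coe_decompose_mul_add_of_right_mem 𝒜 ha, coe_decompose_mul_add_of_right_mem 𝒜 hb,
            mul_comm a, mul_comm b]
      _ = f := by rw [huv, decompose_of_mem_same 𝒜 hf]
  · rintro ⟨_, ⟨u, -, rfl⟩, _, ⟨v, -, rfl⟩, huv⟩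
    exact ⟨u, v, by rw [← huv, mul_comm u, mul_comm v]⟩

end GradedRing

section Homogeneous

open DirectSum

attribute [local instance] MvPolynomial.gradedAlgebra

variable {σ R : Type*} [CommSemiring R]

lemma aeval_smul_of_isHomogeneous {A : Type*} [CommSemiring A] [Algebra R A]
    {f : MvPolynomial σ R} {d : ℕ} (hf : f.IsHomogeneous d) (c : A) (x : σ → A) :
    aeval (c • x) f = c ^ d * aeval x f := by
  simp only [aeval_def, eval₂_eq, Finset.mul_sum]
  refine Finset.sum_congr rfl fun m hm ↦ ?_
  have hdeg : ∑ i ∈ m.support, m i = d := (hf.degree_eq_sum_deg_support hm).symm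
  simp only [Pi.smul_apply, smul_eq_mul, mul_pow, Finset.prod_mul_distrib,
    Finset.prod_pow_eq_pow_sum, hdeg]
  ring

lemma exists_eq_smul_of_dvd_of_isHomogeneous {f g : MvPolynomial σ R} {d : ℕ}
    (hf : f.IsHomogeneous d) (hg : g.IsHomogeneous d) (hgf : g ∣ f) : ∃ c : R, f = c • g := by
  obtain ⟨q, rfl⟩ := hgf
  refine ⟨coeff 0 q, ?_⟩
  calc g * q = decompose (homogeneousSubmodule σ R) (g * q) (d + 0) :=
        (decompose_of_mem_same _ hf).symm
    _ = g * homogeneousComponent 0 q := by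
        rw [coe_decompose_mul_add_of_left_mem _ hg]
        exact congrArg (g * ·) (decomposition.decompose'_apply q 0)
    _ = coeff 0 q • g := by rw [homogeneousComponent_zero, smul_eq_C_mul, mul_comm]

/-- The `d`-th power of the variable `X i`, as an element of the degree-`d` component. -/
noncomputable def xPow (R : Type*) [CommSemiring R] (d : ℕ) (i : σ) : homogeneousSubmodule σ R d :=
  ⟨X i ^ d, isHomogeneous_X_pow i d⟩

end Homogeneous

section CoordMinor

variable {σ R : Type*} [CommRing R]

/-- The `2 × 2` minor `p i * X j - p j * X i` of the matrix with rows `p` and `X`. For fixed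
`i` with `p i` invertible, these linear forms cut out the line through `p` and the origin. -/
noncomputable def coordMinor (p : σ → R) (i j : σ) : MvPolynomial σ R :=
  C (p i) * X j - C (p j) * X i

lemma coordMinor_self (p : σ → R) (i : σ) : coordMinor p i i = 0 :=
  sub_self _

lemma isHomogeneous_coordMinor (p : σ → R) (i j : σ) : (coordMinor p i j).IsHomogeneous 1 :=
  (isHomogeneous_C_mul_X _ _).sub (isHomogeneous_C_mul_X _ _)

lemma eval_coordMinor (p q : σ → R) (i j : σ) :
    eval q (coordMinor p i j) = p i * q j - p j * q i := by
  simp [coordMinor]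

lemma linearIndependent_coordMinor_pair [IsDomain R] {p : σ → R} {i j m : σ} (hp : p i ≠ 0)
    (hji : j ≠ i) (hmi : m ≠ i) (hjm : j ≠ m) :
    LinearIndependent R ![coordMinor p i j, coordMinor p i m] := by
  classical
  rw [LinearIndependent.pair_iff]
  intro s t hst
  have eval_eq_zero (q : σ → R) :
      s * (p i * q j - p j * q i) + t * (p i * q m - p m * q i) = 0 := by
    simpa [smul_eval, eval_coordMinor] using congrArg (eval q) hst
  constructor
  · simpa [hji.symm, hjm.symm, hp] using eval_eq_zero (Pi.single j 1)
  · simpa [hmi.symm, hjm, hp] using eval_eq_zero (Pi.single m 1)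

lemma C_pow_mul_sub_mem_span_coordMinor {f : MvPolynomial σ R} {d : ℕ} (hf : f.IsHomogeneous d)
    (p : σ → R) (i : σ) :
    C (p i ^ d) * f - C (eval p f) * X i ^ d ∈ Ideal.span (Set.range (coordMinor p i)) := by
  -- By homogeneity the two terms are `f` evaluated at `p i * X` and at `X i * p`, whose coordinates
  -- agree modulo the minors.
  set I := Ideal.span (Set.range (coordMinor p i))
  have mk_coord_eq (j : σ) :
      Ideal.Quotient.mkₐ R I (C (p i) * X j) = Ideal.Quotient.mkₐ R I (X i * C (p j)) := by
    rw [mul_comm (X i)]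
    exact Ideal.Quotient.eq.mpr (Ideal.subset_span ⟨j, rfl⟩)
  have C_pow_mul_eq_aeval : C (p i ^ d) * f = aeval ((C (p i) : MvPolynomial σ R) • X) f := by
    rw [aeval_smul_of_isHomogeneous hf, aeval_X_left_apply, C_pow]
  have C_eval_mul_eq_aeval : C (eval p f) * X i ^ d =
      aeval ((X i : MvPolynomial σ R) • (algebraMap R (MvPolynomial σ R) ∘ p)) f := by
    rw [aeval_smul_of_isHomogeneous hf, aeval_algebraMap_apply, aeval_eq_eval, algebraMap_eq,
      mul_comm]
  rw [← Ideal.Quotient.eq, C_pow_mul_eq_aeval, C_eval_mul_eq_aeval]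
  change Ideal.Quotient.mkₐ R I _ = Ideal.Quotient.mkₐ R I _
  rw [comp_aeval_apply, comp_aeval_apply]
  exact congrArg (aeval · f) (funext mk_coord_eq)

end CoordMinor

section PreservesPairIdeals

open DirectSum

attribute [local instance] MvPolynomial.gradedAlgebra

variable {σ R : Type*} [CommRing R] {d : ℕ}

/-- `ψ` maps the degree-`d` part of the ideal `(ℓ, h)` into that ideal, for all linearly independent
linear forms `ℓ` and `h`. -/
def PreservesPairIdeals (ψ : homogeneousSubmodule σ R d →ₗ[R] homogeneousSubmodule σ R d) : Prop :=
  ∀ ℓ h : MvPolynomial σ R, ℓ.IsHomogeneous 1 → h.IsHomogeneous 1 → LinearIndependent R ![ℓ, h] →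
    ∀ f : homogeneousSubmodule σ R d, (f : MvPolynomial σ R) ∈ Ideal.span {ℓ, h} →
      (ψ f : MvPolynomial σ R) ∈ Ideal.span {ℓ, h}

lemma preservesPairIdeals_succ_iff
    {ψ : homogeneousSubmodule σ R (d + 1) →ₗ[R] homogeneousSubmodule σ R (d + 1)} :
    PreservesPairIdeals ψ ↔
      ∀ ℓ h : MvPolynomial σ R, ℓ ∈ homogeneousSubmodule σ R 1 → h ∈ homogeneousSubmodule σ R 1 →
        LinearIndependent R ![ℓ, h] → ∀ f : homogeneousSubmodule σ R (d + 1),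
          (f : MvPolynomial σ R) ∈ (homogeneousSubmodule σ R d).map (LinearMap.mulLeft R ℓ) ⊔
              (homogeneousSubmodule σ R d).map (LinearMap.mulLeft R h) →
            (ψ f : MvPolynomial σ R) ∈ (homogeneousSubmodule σ R d).map (LinearMap.mulLeft R ℓ) ⊔
              (homogeneousSubmodule σ R d).map (LinearMap.mulLeft R h) := by
  refine forall₂_congr fun ℓ h ↦ forall₃_congr fun hℓ hh _ ↦ forall_congr' fun f ↦ ?_
  rw [mem_span_pair_iff_mem_sup_map_mulLeft (homogeneousSubmodule σ R) hℓ hh f.2,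
    mem_span_pair_iff_mem_sup_map_mulLeft (homogeneousSubmodule σ R) hℓ hh (ψ f).2]

namespace PreservesPairIdeals

variable [IsDomain R] {ψ : homogeneousSubmodule σ R d →ₗ[R] homogeneousSubmodule σ R d}

lemma eval_apply_decompose_eq_zero_of_mem_span_coordMinor (hψ : PreservesPairIdeals ψ)
    (hσ : 3 ≤ ENat.card σ) {p : σ → R} {i : σ} (hp : p i ≠ 0) (j : σ) {g : MvPolynomial σ R}
    (hg : g ∈ Ideal.span {coordMinor p i j}) :
    eval p (ψ (decompose (homogeneousSubmodule σ R) g d) : MvPolynomial σ R) = 0 := by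
  obtain rfl | hji := eq_or_ne j i
  · obtain rfl : g = 0 := by simpa [coordMinor_self] using hg
    simp
  obtain ⟨m, hmi, hmj⟩ := ENat.exists_ne_ne_of_three_le hσ i j
  have hhom : (Ideal.span {coordMinor p i j}).IsHomogeneous (homogeneousSubmodule σ R) :=
    Ideal.homogeneous_span _ _ <| by
      rintro _ rfl
      exact ⟨1, isHomogeneous_coordMinor p i j⟩
  have hmem : (ψ (decompose (homogeneousSubmodule σ R) g d) : MvPolynomial σ R) ∈
      Ideal.span {coordMinor p i j, coordMinor p i m} :=
    hψ _ _ (isHomogeneous_coordMinor p i j) (isHomogeneous_coordMinor p i m)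
      (linearIndependent_coordMinor_pair hp hji hmi hmj.symm) _
      (Ideal.span_mono (by simp) (hhom d hg))
  obtain ⟨a, b, hab⟩ := Ideal.mem_span_pair.mp hmem
  simp [← hab, eval_coordMinor, mul_comm]

lemma eval_apply_eq_zero (hψ : PreservesPairIdeals ψ) (hσ : 3 ≤ ENat.card σ) {p : σ → R} {i : σ}
    (hp : p i ≠ 0) {f : homogeneousSubmodule σ R d} (hf : eval p (f : MvPolynomial σ R) = 0) :
    eval p (ψ f : MvPolynomial σ R) = 0 := by
  have hmem : ((p i ^ d • f : homogeneousSubmodule σ R d) : MvPolynomial σ R) ∈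
      ⨆ j, Ideal.span {coordMinor p i j} := by
    have := C_pow_mul_sub_mem_span_coordMinor f.2 p i
    rwa [hf, C_0, zero_mul, sub_zero, ← smul_eq_C_mul, Ideal.span,
      Submodule.span_range_eq_iSup] at this
  have hvanish (g : MvPolynomial σ R) (hg : g ∈ ⨆ j, Ideal.span {coordMinor p i j}) :
      eval p (ψ (decompose (homogeneousSubmodule σ R) g d) : MvPolynomial σ R) = 0 := by
    induction hg using Submodule.iSup_induction' with
    | mem j g hg => exact hψ.eval_apply_decompose_eq_zero_of_mem_span_coordMinor hσ hp j hg
    | zero => simp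
    | add g₁ g₂ _ _ h₁ h₂ => simp [decompose_add, h₁, h₂]
  have hsmul := hvanish _ hmem
  rw [decompose_coe, of_eq_same, map_smul, Submodule.coe_smul, smul_eval] at hsmul
  exact (mul_eq_zero.mp hsmul).resolve_left (pow_ne_zero d hp)

lemma mul_apply_eq_mul_apply [Infinite R] (hψ : PreservesPairIdeals ψ) (hσ : 3 ≤ ENat.card σ)
    (f g : homogeneousSubmodule σ R d) :
    (f * ψ g : MvPolynomial σ R) = g * ψ f := by
  obtain ⟨i⟩ : Nonempty σ := (ENat.card_pos_iff_nonempty σ).mp (zero_lt_three.trans_le hσ)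
  -- Multiplying by `X i` leaves only the points with `p i ≠ 0` to be checked.
  refine mul_left_cancel₀ (X_ne_zero i) (MvPolynomial.funext fun p ↦ ?_)
  obtain hp | hp := eq_or_ne (p i) 0
  · simp [hp]
  have hvanish := hψ.eval_apply_eq_zero hσ hp
    (f := eval p (f : MvPolynomial σ R) • g - eval p (g : MvPolynomial σ R) • f)
    (by simp [smul_eval, mul_comm])
  simp only [map_sub, map_smul, Submodule.coe_sub, Submodule.coe_smul, smul_eval,
    sub_eq_zero] at hvanish
  simp only [map_mul, hvanish]

lemma exists_apply_xPow_eq_smul [Infinite R] (hψ : PreservesPairIdeals ψ) (hσ : 3 ≤ ENat.card σ)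
    (i : σ) : ∃ α : R, ψ (xPow R d i) = α • xPow R d i := by
  obtain ⟨j, hji, -⟩ := ENat.exists_ne_ne_of_three_le hσ i i
  have hcoprime : ¬ (X i : MvPolynomial σ R) ∣ X j ^ d := fun hdvd ↦
    hji (X_dvd_X.mp (X_prime.dvd_of_dvd_pow hdvd)).symm
  have hdvd : (X i ^ d : MvPolynomial σ R) ∣ ψ (xPow R d i) :=
    X_prime.pow_dvd_of_dvd_mul_left d hcoprime
      (Dvd.intro _ (hψ.mul_apply_eq_mul_apply hσ (xPow R d i) (xPow R d j)))
  obtain ⟨α, hα⟩ :=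
    exists_eq_smul_of_dvd_of_isHomogeneous (ψ (xPow R d i)).2 (xPow R d i).2 hdvd
  exact ⟨α, Subtype.ext hα⟩

end PreservesPairIdeals

end PreservesPairIdeals

theorem stmt_8_general {σ R : Type*} [CommRing R] [IsDomain R] [Infinite R]
    (hσ : 3 ≤ ENat.card σ) (d : ℕ)
    (ψ : homogeneousSubmodule σ R d →ₗ[R] homogeneousSubmodule σ R d)
    (hψ : PreservesPairIdeals ψ) :
    ∃ α : R, ∀ f, ψ f = α • f := by
  obtain ⟨i⟩ : Nonempty σ := (ENat.card_pos_iff_nonempty σ).mp (zero_lt_three.trans_le hσ)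
  obtain ⟨α, hα⟩ := hψ.exists_apply_xPow_eq_smul hσ i
  refine ⟨α, fun f ↦ Subtype.ext (mul_left_cancel₀ (pow_ne_zero d (X_ne_zero (R := R) i)) ?_)⟩
  calc (xPow R d i * ψ f : MvPolynomial σ R)
      = f * ψ (xPow R d i) := hψ.mul_apply_eq_mul_apply hσ (xPow R d i) f
    _ = xPow R d i * (α • f : homogeneousSubmodule σ R d) := by
        rw [hα, Submodule.coe_smul, Submodule.coe_smul, mul_smul_comm, mul_smul_comm, mul_comm]

/-- Let `S = k[x,y,z,t]` (char `k` = 0), `d ≥ 1`, and let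
`ψ : S_d → S_d` be `k`-linear such that `ψ(ℓ·S_{d-1} + h·S_{d-1}) ⊆ ℓ·S_{d-1} + h·S_{d-1}`
for all linearly independent linear forms `ℓ, h ∈ S₁`.  Then `ψ` is multiplication by a
scalar `α ∈ k`. -/
theorem stmt_8 {k : Type*} [Field k] [CharZero k] (d : ℕ) (hd : 1 ≤ d)
    (ψ : homogeneousSubmodule (Fin 4) k d →ₗ[k] homogeneousSubmodule (Fin 4) k d)
    (hψ : ∀ ℓ h : MvPolynomial (Fin 4) k,
      ℓ ∈ homogeneousSubmodule (Fin 4) k 1 → h ∈ homogeneousSubmodule (Fin 4) k 1 →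
      LinearIndependent k ![ℓ, h] →
      ∀ f : homogeneousSubmodule (Fin 4) k d,
        (f : MvPolynomial (Fin 4) k) ∈
            Submodule.map (LinearMap.mulLeft k ℓ) (homogeneousSubmodule (Fin 4) k (d - 1)) ⊔
              Submodule.map (LinearMap.mulLeft k h) (homogeneousSubmodule (Fin 4) k (d - 1)) →
          (ψ f : MvPolynomial (Fin 4) k) ∈
            Submodule.map (LinearMap.mulLeft k ℓ) (homogeneousSubmodule (Fin 4) k (d - 1)) ⊔
              Submodule.map (LinearMap.mulLeft k h) (homogeneousSubmodule (Fin 4) k (d - 1))) :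
    ∃ α : k, ∀ f, ψ f = α • f := by
  obtain ⟨d, rfl⟩ := Nat.exists_eq_add_of_le' hd
  exact stmt_8_general (by norm_num) (d + 1) ψ (preservesPairIdeals_succ_iff.mpr hψ)
end

section
/- Let S = ℂ[x,y,z,t], and let I, J ⊆ S be homogeneous ideals defining curves in ℙ³, i.e., such that the Krull dimension of S/I and of S/J equals 2. For such an ideal K define its CM-part CM(K) = {f ∈ S : f maps to 0 in the localization (S/K)_𝔭 for every associated prime 𝔭 of S/K with dim S/𝔭 = 2}. Suppose there is a subset L ⊆ S_1 that is Zariski-dense in S_1 ≅ ℂ^4 (i.e., L is not contained in the zero locus of any nonzero polynomial function on S_1) such that every ℓ ∈ L is a nonzerodivisor on both S/I and S/J, and such that for every ℓ ∈ L the images of I and J in S/ℓS agree in all sufficiently high degrees: (I + ℓS)_n = (J + ℓS)_n for all n ≫ 0. Then CM(I) = CM(J). -/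
open MvPolynomial

/-- The CM-part (Cohen–Macaulay part) of a homogeneous ideal `K ⊆ S = ℂ[x,y,z,t]` defining
a curve: the set of `f ∈ S` mapping to `0` in the localization `(S/K)_𝔭` for every
associated prime `𝔭` of `S/K` with `dim S/𝔭 = 2`. -/
noncomputable def CMpart (K : Ideal (MvPolynomial (Fin 4) ℂ)) : Set (MvPolynomial (Fin 4) ℂ) :=
  {f | ∀ (p : Ideal (MvPolynomial (Fin 4) ℂ)) (hp : p.IsPrime),
    p ∈ associatedPrimes (MvPolynomial (Fin 4) ℂ) (MvPolynomial (Fin 4) ℂ ⧸ K) →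
    ringKrullDim (MvPolynomial (Fin 4) ℂ ⧸ p) = 2 →
    LocalizedModule.mkLinearMap (@Ideal.primeCompl (MvPolynomial (Fin 4) ℂ) _ p hp)
      (MvPolynomial (Fin 4) ℂ ⧸ K) (Ideal.Quotient.mk K f) = 0}

/-!
Put `K = I + J` and choose `ℓ ∈ L` outside every associated prime of the saturation of `K`, so that
`ℓ` is regular on `S ⧸ K` in high degrees. There `K ⊆ I + ℓS`, hence `K_{n+1} ⊆ ℓ K_n + I` for
`n ≥ N`. So the image of `K_{≥ N}` in `S ⧸ I` is generated over `k[ℓ]` by the finite-dimensional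
space `K_N`; as `S` acts on it, `S ⧸ (I : K_N)` is integral over `k[ℓ]` and has dimension at most
one. A prime `p` with `dim S ⧸ p > 1` therefore does not contain `(I : K_N)`, and, not containing
all the variables either, does not contain `(I : K)`. By symmetry `I` and `J` have the same
localization at every such `p`.
-/

open Filter

section Integral

variable {R A M : Type*} [CommRing R] [CommRing A] [Algebra R A]

theorem ringKrullDim_le_of_isIntegral [Algebra.IsIntegral R A] :
    ringKrullDim A ≤ ringKrullDim R :=
  Order.krullDim_le_of_strictMono (PrimeSpectrum.comap (algebraMap R A))
    fun p _ hpq ↦ Ideal.IsIntegral.comap_lt_comap (I := p.asIdeal) hpq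

variable [AddCommGroup M] [Module R M] [Module A M] [IsScalarTower R A M]

theorem isIntegral_quotient_of_annihilator_le [Module.Finite R M] {p : Ideal A}
    (hp : Module.annihilator A M ≤ p) : Algebra.IsIntegral R (A ⧸ p) where
  isIntegral a := by
    obtain ⟨a, rfl⟩ := Ideal.Quotient.mk_surjective a
    obtain ⟨f, hf, hfa⟩ := Algebra.IsIntegral.isIntegral (R := R) (Algebra.lsmul R R M a)
    have hf_ann : Polynomial.aeval a f ∈ Module.annihilator A M := by
      refine Module.mem_annihilator.2 fun m ↦ ?_
      rw [← Polynomial.aeval_def, Polynomial.aeval_algHom_apply] at hfa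
      exact LinearMap.congr_fun hfa m
    refine ⟨f, hf, ?_⟩
    rw [← Polynomial.aeval_def, ← Ideal.Quotient.mkₐ_eq_mk R, Polynomial.aeval_algHom_apply]
    exact Ideal.Quotient.eq_zero_iff_mem.2 (hp hf_ann)

end Integral

section FiniteOverLine

variable {R A M : Type*} [CommRing R] [CommRing A] [Algebra R A] [AddCommGroup M] [Module R M]
  [Module A M] [IsScalarTower R A M] {a : A} {T : Set A}

theorem smul_mem_span_adjoin_singleton (hT : Algebra.adjoin R T = ⊤) {V : Set M}
    (hV : ∀ x ∈ T, ∀ v ∈ V, ∃ w ∈ V, x • v = a • w) (x : A) :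
    ∀ w ∈ Submodule.span (Algebra.adjoin R {a}) V,
      x • w ∈ Submodule.span (Algebra.adjoin R {a}) V := by
  set W := Submodule.span (Algebra.adjoin R {a}) V
  have hx : x ∈ Algebra.adjoin R T := hT ▸ Algebra.mem_top
  induction hx using Algebra.adjoin_induction with
  | mem x hx =>
    intro w hw
    induction hw using Submodule.span_induction with
    | mem v hv =>
      obtain ⟨w, hw, hvw⟩ := hV x hx v hv
      rw [hvw]
      exact W.smul_mem ⟨a, Algebra.self_mem_adjoin_singleton R a⟩ (Submodule.subset_span hw)
    | zero => simp
    | add v w _ _ hv hw => rw [smul_add]; exact W.add_mem hv hw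
    | smul r w _ hw => rw [smul_comm]; exact W.smul_mem r hw
  | algebraMap r =>
    intro w hw
    rw [algebraMap_smul]
    exact W.smul_of_tower_mem r hw
  | add x y _ _ hx hy => intro w hw; rw [add_smul]; exact W.add_mem (hx w hw) (hy w hw)
  | mul x y _ _ hx hy => intro w hw; rw [mul_smul]; exact hx _ (hy w hw)

theorem restrictScalars_span_eq_span_adjoin_singleton (hT : Algebra.adjoin R T = ⊤) {V : Set M}
    (hV : ∀ x ∈ T, ∀ v ∈ V, ∃ w ∈ V, x • v = a • w) :
    (Submodule.span A V).restrictScalars (Algebra.adjoin R {a}) =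
      Submodule.span (Algebra.adjoin R {a}) V := by
  refine le_antisymm (fun v (hv : v ∈ Submodule.span A V) ↦ ?_)
    (Submodule.span_le_restrictScalars _ _ _)
  induction hv using Submodule.span_induction with
  | mem v hv => exact Submodule.subset_span hv
  | zero => exact Submodule.zero_mem _
  | add v w _ _ hv hw => exact Submodule.add_mem _ hv hw
  | smul x v _ hv => exact smul_mem_span_adjoin_singleton hT hV x v hv

variable {k : Type*} [Field k] [Algebra k A]

theorem ringKrullDim_adjoin_singleton_le_one (a : A) :
    ringKrullDim (Algebra.adjoin k {a}) ≤ 1 := by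
  let φ : Polynomial k →ₐ[k] A := Polynomial.aeval a
  calc ringKrullDim (Algebra.adjoin k {a})
      = ringKrullDim φ.range := ringKrullDim_eq_of_ringEquiv
        (Subalgebra.equivOfEq _ _ (Algebra.adjoin_singleton_eq_range_aeval k a)).toRingEquiv
    _ ≤ ringKrullDim (Polynomial k) :=
        ringKrullDim_le_of_surjective φ.rangeRestrict.toRingHom φ.rangeRestrict_surjective
    _ = 1 := by
        rw [Polynomial.ringKrullDim_of_isNoetherianRing, ringKrullDim_eq_zero_of_field, zero_add]

variable [Module k M] [IsScalarTower k A M]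

/- `A` acts on the finite `k[a]`-module generated by `V`, so modulo the annihilator of `V` it is
integral over `k[a]`. -/
theorem ringKrullDim_quotient_le_one_of_bot_colon_le (hT : Algebra.adjoin k T = ⊤)
    {V : Submodule k M} (hVfg : V.FG)
    (hV : ∀ x ∈ T, ∀ v ∈ V, ∃ w ∈ V, x • v = a • w) {p : Ideal A}
    (hp : (⊥ : Submodule A M).colon V ≤ p) :
    ringKrullDim (A ⧸ p) ≤ 1 := by
  have : Module.Finite (Algebra.adjoin k {a}) (Submodule.span A (V : Set M)) := by
    obtain ⟨B, rfl⟩ := hVfg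
    refine Module.Finite.iff_fg
      (N := (Submodule.span A _).restrictScalars (Algebra.adjoin k {a})).2 ?_
    rw [restrictScalars_span_eq_span_adjoin_singleton hT hV, Submodule.span_span_of_tower]
    exact Submodule.fg_span B.finite_toSet
  rw [Submodule.bot_colon'] at hp
  have := isIntegral_quotient_of_annihilator_le (R := Algebra.adjoin k {a}) hp
  exact (ringKrullDim_le_of_isIntegral (R := Algebra.adjoin k {a})).trans
    (ringKrullDim_adjoin_singleton_le_one a)

theorem ringKrullDim_quotient_le_one_of_colon_le (hT : Algebra.adjoin k T = ⊤)
    {V : Submodule k A} (hVfg : V.FG) {I : Ideal A}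
    (hV : ∀ x ∈ T, ∀ v ∈ V, ∃ w ∈ V, x * v - a * w ∈ I) {p : Ideal A} (hp : I.colon V ≤ p) :
    ringKrullDim (A ⧸ p) ≤ 1 := by
  refine ringKrullDim_quotient_le_one_of_bot_colon_le (a := a) hT
    (hVfg.map (Ideal.Quotient.mkₐ k I).toLinearMap) ?_ fun s hs ↦ hp ?_
  · rintro x hx _ ⟨v, hv, rfl⟩
    obtain ⟨w, hw, hvw⟩ := hV x hx v hv
    exact ⟨_, ⟨w, hw, rfl⟩, Ideal.Quotient.eq.2 hvw⟩
  · exact Submodule.mem_colon.2 fun v hv ↦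
      Ideal.Quotient.eq_zero_iff_mem.1 (Submodule.mem_colon.1 hs _ ⟨v, hv, rfl⟩)

end FiniteOverLine

section AssociatedPrimes

variable {A : Type*} [CommRing A] {I J K m p : Ideal A}

theorem exists_colon_pow_colon_le [IsNoetherianRing A] (K m : Ideal A) :
    ∃ c : ℕ, (K.colon ↑(m ^ c)).colon (m : Set A) ≤ K.colon ↑(m ^ c) := by
  have hmono : Monotone fun c ↦ K.colon ↑(m ^ c) := fun _ _ h ↦
    Submodule.colon_mono le_rfl (Ideal.pow_le_pow_right h)
  obtain ⟨c, hc⟩ := monotone_stabilizes_iff_noetherian.2 ‹_› ⟨_, hmono⟩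
  refine ⟨c, fun g hg ↦ ?_⟩
  have hle : m ^ (c + 1) ≤ K.colon {g} := by
    rw [pow_succ, Ideal.mul_le]
    intro y hy x hx
    have hgx : g * x * y ∈ K := Submodule.mem_colon.1 (Submodule.mem_colon.1 hg x hx) y hy
    rwa [Submodule.mem_colon_singleton, smul_eq_mul, mul_comm, mul_comm y, ← mul_assoc]
  rw [show K.colon ↑(m ^ c) = K.colon ↑(m ^ (c + 1)) from hc (c + 1) c.le_succ]
  refine Submodule.mem_colon.2 fun x hx ↦ ?_
  rw [smul_eq_mul, mul_comm]
  exact Submodule.mem_colon_singleton.1 (hle hx)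

theorem smul_mk_eq_zero_iff {r g : A} : r • Ideal.Quotient.mk K g = 0 ↔ r * g ∈ K :=
  Ideal.Quotient.eq_zero_iff_mem

theorem mem_associatedPrimes_quotient_iff [IsNoetherianRing A] :
    p ∈ associatedPrimes A (A ⧸ K) ↔ p.IsPrime ∧ ∃ g, ∀ r, r ∈ p ↔ r * g ∈ K := by
  rw [AssociatedPrimes.mem_iff, isAssociatedPrime_iff, Ideal.Quotient.mk_surjective.exists]
  simp only [SetLike.ext_iff, Submodule.mem_colon_singleton, Submodule.mem_bot,
    smul_mk_eq_zero_iff]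

theorem not_le_of_mem_associatedPrimes_of_colon_le [IsNoetherianRing A]
    (hK : K.colon (m : Set A) ≤ K) (hp : p ∈ associatedPrimes A (A ⧸ K)) : ¬ m ≤ p := by
  obtain ⟨hprime, g, hg⟩ := mem_associatedPrimes_quotient_iff.1 hp
  intro hmp
  have hgK : g ∈ K := hK <| Submodule.mem_colon.2 fun r hr ↦ by
    rw [smul_eq_mul, mul_comm]
    exact (hg r).1 (hmp hr)
  exact hprime.one_notMem ((hg 1).2 (by rwa [one_mul]))

theorem mem_of_mul_mem_of_forall_associatedPrimes_notMem [IsNoetherianRing A] {a g : A}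
    (ha : ∀ p ∈ associatedPrimes A (A ⧸ K), a ∉ p) (hg : a * g ∈ K) : g ∈ K := by
  by_contra hgK
  have : a ∈ ⋃ p ∈ associatedPrimes A (A ⧸ K), (p : Set A) := by
    rw [biUnion_associatedPrimes_eq_zero_divisors]
    exact ⟨Ideal.Quotient.mk K g, mt Ideal.Quotient.eq_zero_iff_mem.1 hgK,
      Ideal.Quotient.eq_zero_iff_mem.2 hg⟩
  obtain ⟨p, hp, hap⟩ := Set.mem_iUnion₂.1 this
  exact ha p hp hap

theorem mem_associatedPrimes_of_not_colon_le [IsNoetherianRing A]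
    (hIJ : ¬ I.colon (J : Set A) ≤ p) (hJI : ¬ J.colon (I : Set A) ≤ p)
    (hp : p ∈ associatedPrimes A (A ⧸ J)) : p ∈ associatedPrimes A (A ⧸ I) := by
  obtain ⟨s, hs, hsp⟩ := SetLike.not_le_iff_exists.1 hIJ
  obtain ⟨t, ht, htp⟩ := SetLike.not_le_iff_exists.1 hJI
  obtain ⟨hprime, g, hg⟩ := mem_associatedPrimes_quotient_iff.1 hp
  refine mem_associatedPrimes_quotient_iff.2 ⟨hprime, s * g, fun r ↦ ⟨fun hr ↦ ?_, fun hr ↦ ?_⟩⟩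
  · rw [mul_left_comm]
    exact Submodule.mem_colon.1 hs _ ((hg r).1 hr)
  · have hmem : t * s * r ∈ p := (hg _).2 <| by
      simpa only [smul_eq_mul, mul_assoc, mul_left_comm] using Submodule.mem_colon.1 ht _ hr
    exact (hprime.mem_or_mem hmem).resolve_left (hprime.mul_notMem htp hsp)

theorem mkLinearMap_primeCompl_mk_eq_zero_iff [p.IsPrime] {f : A} :
    LocalizedModule.mkLinearMap p.primeCompl (A ⧸ K) (Ideal.Quotient.mk K f) = 0 ↔
      ∃ s ∉ p, s * f ∈ K := by
  rw [← LinearMap.mem_ker, LocalizedModule.mem_ker_mkLinearMap_iff]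
  simp only [smul_mk_eq_zero_iff, Ideal.mem_primeCompl_iff]

/-- The part of `K` of dimension `d`: the elements of `A` vanishing in the localization of `A ⧸ K`
at every associated prime `p` of `A ⧸ K` with `dim A ⧸ p = d`. For `A = ℂ[x,y,z,t]` and `d = 2` it
is `CMpart K`. -/
def dimPart (d : WithBot ℕ∞) (K : Ideal A) : Set A :=
  {f | ∀ (p : Ideal A) (_ : p.IsPrime), p ∈ associatedPrimes A (A ⧸ K) → ringKrullDim (A ⧸ p) = d →
    LocalizedModule.mkLinearMap p.primeCompl (A ⧸ K) (Ideal.Quotient.mk K f) = 0}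

theorem dimPart_subset_dimPart [IsNoetherianRing A] {d : WithBot ℕ∞}
    (hIJ : ∀ p : Ideal A, p.IsPrime → ringKrullDim (A ⧸ p) = d → ¬ I.colon (J : Set A) ≤ p)
    (hJI : ∀ p : Ideal A, p.IsPrime → ringKrullDim (A ⧸ p) = d → ¬ J.colon (I : Set A) ≤ p) :
    dimPart d I ⊆ dimPart d J := by
  intro f hf p hprime hp hd
  obtain ⟨t, ht, htp⟩ := SetLike.not_le_iff_exists.1 (hJI p hprime hd)
  have hpI := mem_associatedPrimes_of_not_colon_le (hIJ p hprime hd) (hJI p hprime hd) hp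
  obtain ⟨u, hup, huf⟩ := mkLinearMap_primeCompl_mk_eq_zero_iff.1 (hf p hprime hpI hd)
  refine mkLinearMap_primeCompl_mk_eq_zero_iff.2 ⟨t * u, hprime.mul_notMem htp hup, ?_⟩
  rw [mul_assoc]
  exact Submodule.mem_colon.1 ht _ huf

end AssociatedPrimes

section LinearForms

variable {σ R : Type*} [CommSemiring R]

/-- The coefficient vector of a linear form, i.e. its coordinates under `S₁ ≅ R ^ σ`. -/
noncomputable def linearCoeff (ℓ : MvPolynomial σ R) (i : σ) : R := coeff (Finsupp.single i 1) ℓ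

/-- Zariski density of a set of linear forms in the affine space `S₁`: no nonzero polynomial in the
coefficients of a linear form vanishes on `L`. -/
def IsZariskiDense (L : Set (MvPolynomial σ R)) : Prop :=
  ∀ P : MvPolynomial σ R, (∀ ℓ ∈ L, eval (linearCoeff ℓ) P = 0) → P = 0

theorem exists_eval_linearCoeff_eq [Finite σ] (φ : MvPolynomial σ R →ₗ[R] R) :
    ∃ P : MvPolynomial σ R, ∀ ℓ ∈ homogeneousSubmodule σ R 1, eval (linearCoeff ℓ) P = φ ℓ := by
  classical
  cases nonempty_fintype σ
  refine ⟨∑ j, C (φ (X j)) * X j, fun ℓ hℓ ↦ ?_⟩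
  have heval : ∀ f : MvPolynomial σ R,
      eval (linearCoeff f) (∑ j, C (φ (X j)) * X j) = ∑ j, φ (X j) * linearCoeff f j := by simp
  rw [heval]
  rw [homogeneousSubmodule_one_eq_span_X] at hℓ
  induction hℓ using Submodule.span_induction with
  | mem f hf => obtain ⟨i, rfl⟩ := hf; simp [linearCoeff, coeff_X, Finsupp.single_left_inj]
  | zero => simp [linearCoeff]
  | add f g _ _ hf hg =>
    rw [map_add, ← hf, ← hg, ← Finset.sum_add_distrib]
    exact Finset.sum_congr rfl fun j _ ↦ mul_add ..
  | smul r f _ hf =>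
    rw [map_smul, ← hf, Finset.smul_sum]
    exact Finset.sum_congr rfl fun j _ ↦ mul_left_comm ..

variable {k : Type*} [Field k] [Finite σ] {L : Set (MvPolynomial σ k)}

theorem exists_ne_zero_eval_linearCoeff_eq_zero {W : Submodule k (MvPolynomial σ k)} {i : σ}
    (hi : X i ∉ W) :
    ∃ P : MvPolynomial σ k, P ≠ 0 ∧
      ∀ ℓ ∈ homogeneousSubmodule σ k 1, ℓ ∈ W → eval (linearCoeff ℓ) P = 0 := by
  obtain ⟨φ, hφi, hφW⟩ := Submodule.exists_le_ker_of_notMem hi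
  obtain ⟨P, hP⟩ := exists_eval_linearCoeff_eq φ
  refine ⟨P, ?_, fun ℓ hℓ hℓW ↦ (hP ℓ hℓ).trans (hφW hℓW)⟩
  rintro rfl
  exact hφi ((hP (X i) (isHomogeneous_X k i)).symm.trans (map_zero _))

theorem IsZariskiDense.exists_forall_notMem (hdense : IsZariskiDense L)
    (hL : ∀ ℓ ∈ L, ℓ ∈ homogeneousSubmodule σ k 1) {Ps : Set (Ideal (MvPolynomial σ k))}
    (hfin : Ps.Finite) (hPs : ∀ p ∈ Ps, ¬ idealOfVars σ k ≤ p) : ∃ ℓ ∈ L, ∀ p ∈ Ps, ℓ ∉ p := by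
  have hpoly : ∀ p ∈ Ps, ∃ P : MvPolynomial σ k, P ≠ 0 ∧
      ∀ ℓ ∈ homogeneousSubmodule σ k 1, ℓ ∈ p → eval (linearCoeff ℓ) P = 0 := by
    intro p hp
    obtain ⟨i, hi⟩ : ∃ i, X i ∉ p := by
      simpa [idealOfVars, Ideal.span_le, Set.range_subset_iff] using hPs p hp
    exact exists_ne_zero_eval_linearCoeff_eq_zero (W := p.restrictScalars k) hi
  choose! P hP0 hP using hpoly
  have hprod : ∏ p ∈ hfin.toFinset, P p ≠ 0 :=
    Finset.prod_ne_zero_iff.2 fun p hp ↦ hP0 p (hfin.mem_toFinset.1 hp)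
  obtain ⟨ℓ, hℓ, heval⟩ : ∃ ℓ ∈ L, eval (linearCoeff ℓ) (∏ p ∈ hfin.toFinset, P p) ≠ 0 := by
    by_contra! hzero
    exact hprod (hdense _ hzero)
  rw [map_prod, Finset.prod_ne_zero_iff] at heval
  exact ⟨ℓ, hℓ, fun p hp hℓp ↦ heval p (hfin.mem_toFinset.2 hp) (hP p hp ℓ (hL ℓ hℓ) hℓp)⟩

theorem IsZariskiDense.exists_regular (hdense : IsZariskiDense L)
    (hL : ∀ ℓ ∈ L, ℓ ∈ homogeneousSubmodule σ k 1) {K : Ideal (MvPolynomial σ k)}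
    (hK : K.colon (idealOfVars σ k : Set (MvPolynomial σ k)) ≤ K) :
    ∃ ℓ ∈ L, ∀ g, ℓ * g ∈ K → g ∈ K := by
  obtain ⟨ℓ, hℓ, hℓp⟩ := hdense.exists_forall_notMem hL (associatedPrimes.finite _ _)
    fun _ ↦ not_le_of_mem_associatedPrimes_of_colon_le hK
  exact ⟨ℓ, hℓ, fun _ ↦ mem_of_mul_mem_of_forall_associatedPrimes_notMem hℓp⟩

end LinearForms

section Graded

attribute [local instance] MvPolynomial.gradedAlgebra

section CommRing

variable {σ R : Type*} [CommRing R] {I J K : Ideal (MvPolynomial σ R)} {ℓ : MvPolynomial σ R}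

theorem coe_decompose_homogeneousSubmodule (f : MvPolynomial σ R) (n : ℕ) :
    (DirectSum.decompose (homogeneousSubmodule σ R) f n : MvPolynomial σ R) =
      homogeneousComponent n f :=
  decomposition.decompose'_apply f n

theorem isHomogeneous_of_homogeneousComponent_mem
    (hI : ∀ f ∈ I, ∀ n, homogeneousComponent n f ∈ I) :
    I.IsHomogeneous (homogeneousSubmodule σ R) := fun n f hf ↦ by
  rw [coe_decompose_homogeneousSubmodule]
  exact hI f hf n

theorem homogeneousComponent_add_mul {f : MvPolynomial σ R} {d : ℕ} (hf : f.IsHomogeneous d)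
    (n : ℕ) (g : MvPolynomial σ R) :
    homogeneousComponent (d + n) (f * g) = f * homogeneousComponent n g := by
  simpa only [coe_decompose_homogeneousSubmodule] using
    DirectSum.coe_decompose_mul_add_of_left_mem (homogeneousSubmodule σ R) (b := g) (j := n) hf

theorem exists_totalDegree_le_sub_mem_pow_idealOfVars [Finite σ] (c : ℕ) (a : MvPolynomial σ R) :
    ∃ b : MvPolynomial σ R, b.totalDegree ≤ c ∧ a - b ∈ idealOfVars σ R ^ c := by
  refine ⟨MvPowerSeries.truncTotal (c + 1) a, Nat.lt_succ_iff.1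
    (MvPowerSeries.totalDegree_truncTotal_lt _ c.succ_ne_zero), ?_⟩
  refine (mem_pow_idealOfVars_iff' ..).2 fun x hx ↦ ?_
  rw [coeff_sub, MvPowerSeries.coeff_truncTotal _ (hx.trans c.lt_succ_self), coeff_coe, sub_self]

theorem eventually_homogeneousComponent_mul_mem [Finite σ]
    (hK : K.IsHomogeneous (homogeneousSubmodule σ R)) {c : ℕ} {t : MvPolynomial σ R}
    (ht : t ∈ K.colon ↑(idealOfVars σ R ^ c)) :
    ∀ᶠ n in atTop, ∀ a, homogeneousComponent n (a * t) ∈ K := by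
  filter_upwards [eventually_gt_atTop (c + t.totalDegree)] with n hn a
  obtain ⟨b, hb, hab⟩ := exists_totalDegree_le_sub_mem_pow_idealOfVars c a
  have hbt : homogeneousComponent n (b * t) = 0 := homogeneousComponent_eq_zero _ _ <|
    ((totalDegree_mul b t).trans (Nat.add_le_add_right hb _)).trans_lt hn
  have habt : (a - b) * t ∈ K := by
    rw [mul_comm]
    exact Submodule.mem_colon.1 ht _ hab
  rw [← sub_add_cancel a b, add_mul, map_add, hbt, add_zero]
  exact homogeneousComponent_mem_of_mem hK habt n

theorem eventually_mem_of_mem_colon_pow_idealOfVars [Finite σ] [IsNoetherianRing R]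
    (hK : K.IsHomogeneous (homogeneousSubmodule σ R)) (c : ℕ) :
    ∀ᶠ n in atTop, ∀ f ∈ K.colon ↑(idealOfVars σ R ^ c), f.IsHomogeneous n → f ∈ K := by
  obtain ⟨T, hT⟩ := IsNoetherian.noetherian (K.colon ↑(idealOfVars σ R ^ c))
  have hT_mem : ∀ᶠ n in atTop, ∀ t ∈ T, ∀ a, homogeneousComponent n (a * t) ∈ K :=
    (Filter.eventually_all_finset T).2 fun t ht ↦
      eventually_homogeneousComponent_mul_mem hK (hT ▸ Submodule.subset_span ht)
  filter_upwards [hT_mem] with n hn f hf hfn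
  rw [← hT] at hf
  obtain ⟨a, -, rfl⟩ := Submodule.mem_span_finset.1 hf
  rw [← homogeneousComponent_eq_self hfn, map_sum]
  exact K.sum_mem fun t ht ↦ hn t ht (a t)

theorem exists_isHomogeneous_sub_mul_mem (hI : I.IsHomogeneous (homogeneousSubmodule σ R))
    (hℓ : ℓ.IsHomogeneous 1) {f : MvPolynomial σ R} {n : ℕ} (hfn : f.IsHomogeneous (1 + n))
    (hf : f ∈ I ⊔ Ideal.span {ℓ}) : ∃ g : MvPolynomial σ R, g.IsHomogeneous n ∧ f - ℓ * g ∈ I := by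
  obtain ⟨i, hi, h, hh, rfl⟩ := Submodule.mem_sup.1 hf
  obtain ⟨g, rfl⟩ := Ideal.mem_span_singleton.1 hh
  refine ⟨homogeneousComponent n g, homogeneousComponent_isHomogeneous n g, ?_⟩
  rw [← homogeneousComponent_eq_self hfn, map_add, homogeneousComponent_add_mul hℓ,
    add_sub_cancel_right]
  exact homogeneousComponent_mem_of_mem hI hi _

theorem eventually_exists_isHomogeneous_sub_mul_mem
    (hI : I.IsHomogeneous (homogeneousSubmodule σ R)) (hIK : I ≤ K) (hℓ : ℓ.IsHomogeneous 1)
    (hreg : ∀ᶠ n in atTop, ∀ g : MvPolynomial σ R, g.IsHomogeneous n → ℓ * g ∈ K → g ∈ K)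
    (hK : ∀ᶠ n in atTop, ∀ f ∈ K, f.IsHomogeneous n → f ∈ I ⊔ Ideal.span {ℓ}) :
    ∀ᶠ n in atTop, ∀ f ∈ K, f.IsHomogeneous (1 + n) →
      ∃ g ∈ K, g.IsHomogeneous n ∧ f - ℓ * g ∈ I := by
  have hK_succ := (tendsto_add_atTop_nat 1).eventually hK
  filter_upwards [hreg, hK_succ] with n hreg hK f hf hfn
  obtain ⟨g, hg, hfg⟩ :=
    exists_isHomogeneous_sub_mul_mem hI hℓ hfn (hK f hf (add_comm 1 n ▸ hfn))
  exact ⟨g, hreg g hg ((K.sub_mem_iff_right hf).1 (hIK hfg)), hg, hfg⟩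

theorem eventually_mem_sup_span_singleton (hI : I.IsHomogeneous (homogeneousSubmodule σ R))
    (hJ : J.IsHomogeneous (homogeneousSubmodule σ R))
    (hIJ : ∀ᶠ n in atTop,
      (I ⊔ Ideal.span {ℓ}).restrictScalars R ⊓ homogeneousSubmodule σ R n =
        (J ⊔ Ideal.span {ℓ}).restrictScalars R ⊓ homogeneousSubmodule σ R n) :
    ∀ᶠ n in atTop, ∀ f ∈ I ⊔ J, f.IsHomogeneous n → f ∈ I ⊔ Ideal.span {ℓ} := by
  filter_upwards [hIJ] with n hn f hf hfn
  obtain ⟨i, hi, j, hj, rfl⟩ := Submodule.mem_sup.1 hf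
  have hjn : homogeneousComponent n j ∈
      (I ⊔ Ideal.span {ℓ}).restrictScalars R ⊓ homogeneousSubmodule σ R n :=
    hn ▸ ⟨Ideal.mem_sup_left (homogeneousComponent_mem_of_mem hJ hj n),
      homogeneousComponent_isHomogeneous n j⟩
  rw [← homogeneousComponent_eq_self hfn, map_add]
  exact add_mem (Ideal.mem_sup_left (homogeneousComponent_mem_of_mem hI hi n)) hjn.1

theorem mul_mem_of_forall_exists_sub_mul_mem {N : ℕ}
    (hdesc : ∀ n ≥ N, ∀ f ∈ K, f.IsHomogeneous (1 + n) →
      ∃ g ∈ K, g.IsHomogeneous n ∧ f - ℓ * g ∈ I)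
    {s : MvPolynomial σ R} (hs : ∀ f ∈ K, f.IsHomogeneous N → s * f ∈ I) {n : ℕ} (hn : N ≤ n) :
    ∀ f ∈ K, f.IsHomogeneous n → s * f ∈ I := by
  induction n, hn using Nat.le_induction with
  | base => exact hs
  | succ n hn ih =>
    intro f hf hfn
    obtain ⟨g, hg, hgn, hfg⟩ := hdesc n hn f hf (add_comm n 1 ▸ hfn)
    have hsplit : s * f = s * (f - ℓ * g) + ℓ * (s * g) := by ring
    rw [hsplit]
    exact I.add_mem (I.mul_mem_left s hfg) (I.mul_mem_left ℓ (ih g hg hgn))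

end CommRing

section Field

variable {σ k : Type*} [Field k] {I J K p : Ideal (MvPolynomial σ k)} {ℓ : MvPolynomial σ k}

/- `ℓ` is chosen regular modulo the saturation of `K`, which agrees with `K` in high degrees. -/
theorem IsZariskiDense.exists_eventually_regular [Finite σ] {L : Set (MvPolynomial σ k)}
    (hdense : IsZariskiDense L) (hL : ∀ ℓ ∈ L, ℓ ∈ homogeneousSubmodule σ k 1)
    (hK : K.IsHomogeneous (homogeneousSubmodule σ k)) :
    ∃ ℓ ∈ L, ∀ᶠ n in atTop, ∀ g : MvPolynomial σ k, g.IsHomogeneous n → ℓ * g ∈ K → g ∈ K := by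
  obtain ⟨c, hc⟩ := exists_colon_pow_colon_le K (idealOfVars σ k)
  obtain ⟨ℓ, hℓ, hreg⟩ := hdense.exists_regular hL hc
  refine ⟨ℓ, hℓ, ?_⟩
  filter_upwards [eventually_mem_of_mem_colon_pow_idealOfVars hK c] with n hn g hg hℓg
  exact hn g (hreg g (Ideal.le_colon hℓg)) hg

theorem exists_notMem_forall_mul_mem [Finite σ] {N : ℕ}
    (hdesc : ∀ n ≥ N, ∀ f ∈ K, f.IsHomogeneous (1 + n) →
      ∃ g ∈ K, g.IsHomogeneous n ∧ f - ℓ * g ∈ I)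
    (hp : 1 < ringKrullDim (MvPolynomial σ k ⧸ p)) :
    ∃ s ∉ p, ∀ f ∈ K, f.IsHomogeneous N → s * f ∈ I := by
  let V : Submodule k (MvPolynomial σ k) := K.restrictScalars k ⊓ homogeneousSubmodule σ k N
  have hVfg : V.FG := (homogeneousSubmodule_fg σ k N).of_le inf_le_right
  have hV : ∀ x ∈ Set.range X, ∀ v ∈ V, ∃ w ∈ V, x * v - ℓ * w ∈ I := by
    rintro _ ⟨i, rfl⟩ v ⟨hvK, hvN⟩
    obtain ⟨w, hwK, hwN, hw⟩ :=
      hdesc N le_rfl (X i * v) (K.mul_mem_left _ hvK) ((isHomogeneous_X k i).mul hvN)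
    exact ⟨w, ⟨hwK, hwN⟩, hw⟩
  obtain ⟨s, hs, hsp⟩ := SetLike.not_le_iff_exists.1 <|
    mt (ringKrullDim_quotient_le_one_of_colon_le adjoin_range_X hVfg hV) hp.not_ge
  exact ⟨s, hsp, fun f hf hfN ↦ Submodule.mem_colon.1 hs f ⟨hf, hfN⟩⟩

theorem exists_X_notMem_of_one_lt_ringKrullDim
    (hp : 1 < ringKrullDim (MvPolynomial σ k ⧸ p)) : ∃ i, X i ∉ p := by
  by_contra! hX
  refine hp.not_ge (ringKrullDim_quotient_le_one_of_colon_le (k := k) (a := 0) (I := p)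
    (V := Submodule.span k {1}) adjoin_range_X (Submodule.fg_span_singleton _) ?_ ?_)
  · rintro _ ⟨i, rfl⟩ v hv
    exact ⟨v, hv, by simpa using p.mul_mem_right v (hX i)⟩
  · intro s hs
    simpa using Submodule.mem_colon.1 hs 1 (Submodule.mem_span_singleton_self 1)

theorem not_colon_le_of_forall_exists_sub_mul_mem [Finite σ] [p.IsPrime] {N : ℕ}
    (hK : K.IsHomogeneous (homogeneousSubmodule σ k))
    (hdesc : ∀ n ≥ N, ∀ f ∈ K, f.IsHomogeneous (1 + n) →
      ∃ g ∈ K, g.IsHomogeneous n ∧ f - ℓ * g ∈ I)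
    (hp : 1 < ringKrullDim (MvPolynomial σ k ⧸ p)) :
    ¬ I.colon (K : Set (MvPolynomial σ k)) ≤ p := by
  obtain ⟨s, hsp, hs⟩ := exists_notMem_forall_mul_mem hdesc hp
  obtain ⟨i, hi⟩ := exists_X_notMem_of_one_lt_ringKrullDim hp
  refine SetLike.not_le_iff_exists.2 ⟨s * X i ^ N, Submodule.mem_colon.2 fun f hf ↦ ?_,
    Ideal.IsPrime.mul_notMem ‹_› hsp (mt (Ideal.IsPrime.mem_of_pow_mem ‹_› N) hi)⟩
  rw [← sum_homogeneousComponent f, Finset.smul_sum]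
  refine I.sum_mem fun n _ ↦ ?_
  rw [smul_eq_mul, mul_assoc]
  exact mul_mem_of_forall_exists_sub_mul_mem hdesc hs (Nat.le_add_right N n) _
    (K.mul_mem_left _ (homogeneousComponent_mem_of_mem hK hf n))
    ((isHomogeneous_X_pow i N).mul (homogeneousComponent_isHomogeneous n f))

variable [Finite σ] {L : Set (MvPolynomial σ k)}

theorem not_colon_le_of_eventually_eq
    (hI : I.IsHomogeneous (homogeneousSubmodule σ k))
    (hJ : J.IsHomogeneous (homogeneousSubmodule σ k))
    (hL : ∀ ℓ ∈ L, ℓ ∈ homogeneousSubmodule σ k 1) (hdense : IsZariskiDense L)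
    (hIJ : ∀ ℓ ∈ L, ∀ᶠ n in atTop,
      (I ⊔ Ideal.span {ℓ}).restrictScalars k ⊓ homogeneousSubmodule σ k n =
        (J ⊔ Ideal.span {ℓ}).restrictScalars k ⊓ homogeneousSubmodule σ k n)
    [p.IsPrime] (hp : 1 < ringKrullDim (MvPolynomial σ k ⧸ p)) :
    ¬ I.colon (J : Set (MvPolynomial σ k)) ≤ p := by
  have hK := hI.sup hJ
  obtain ⟨ℓ, hℓ, hreg⟩ := hdense.exists_eventually_regular hL hK
  obtain ⟨N, hdesc⟩ := eventually_atTop.1 <| eventually_exists_isHomogeneous_sub_mul_mem hI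
    le_sup_left (hL ℓ hℓ) hreg (eventually_mem_sup_span_singleton hI hJ (hIJ ℓ hℓ))
  exact fun hle ↦ not_colon_le_of_forall_exists_sub_mul_mem hK hdesc hp
    ((Submodule.colon_mono le_rfl (le_sup_right (a := I))).trans hle)

theorem stmt_12_general {d : WithBot ℕ∞} (hd : 1 < d)
    (hI : I.IsHomogeneous (homogeneousSubmodule σ k))
    (hJ : J.IsHomogeneous (homogeneousSubmodule σ k))
    (hL : ∀ ℓ ∈ L, ℓ ∈ homogeneousSubmodule σ k 1) (hdense : IsZariskiDense L)
    (hIJ : ∀ ℓ ∈ L, ∀ᶠ n in atTop,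
      (I ⊔ Ideal.span {ℓ}).restrictScalars k ⊓ homogeneousSubmodule σ k n =
        (J ⊔ Ideal.span {ℓ}).restrictScalars k ⊓ homogeneousSubmodule σ k n) :
    dimPart d I = dimPart d J := by
  have hIJ_colon : ∀ p : Ideal (MvPolynomial σ k), p.IsPrime →
      ringKrullDim (MvPolynomial σ k ⧸ p) = d → ¬ I.colon (J : Set (MvPolynomial σ k)) ≤ p :=
    fun _ _ hp ↦ not_colon_le_of_eventually_eq hI hJ hL hdense hIJ (hp ▸ hd)
  have hJI_colon : ∀ p : Ideal (MvPolynomial σ k), p.IsPrime →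
      ringKrullDim (MvPolynomial σ k ⧸ p) = d → ¬ J.colon (I : Set (MvPolynomial σ k)) ≤ p :=
    fun _ _ hp ↦ not_colon_le_of_eventually_eq hJ hI hL hdense
      (fun ℓ hℓ ↦ (hIJ ℓ hℓ).mono fun _ ↦ Eq.symm) (hp ▸ hd)
  exact (dimPart_subset_dimPart hIJ_colon hJI_colon).antisymm
    (dimPart_subset_dimPart hJI_colon hIJ_colon)

end Field

end Graded

/-- Let `S = ℂ[x,y,z,t]` and let `I, J ⊆ S` be homogeneous ideals with
`dim S/I = dim S/J = 2` (ideals of curves in `ℙ³`).  Suppose there is a Zariski-dense set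
`L` of linear forms, each a nonzerodivisor on `S/I` and on `S/J`, such that for every
`ℓ ∈ L` the images of `I` and `J` modulo `ℓ` agree in all sufficiently high degrees.
Then `CM(I) = CM(J)`. -/
theorem stmt_12 (I J : Ideal (MvPolynomial (Fin 4) ℂ))
    (hIhom : ∀ f ∈ I, ∀ n : ℕ, homogeneousComponent n f ∈ I)
    (hJhom : ∀ f ∈ J, ∀ n : ℕ, homogeneousComponent n f ∈ J)
    (hIdim : ringKrullDim (MvPolynomial (Fin 4) ℂ ⧸ I) = 2)
    (hJdim : ringKrullDim (MvPolynomial (Fin 4) ℂ ⧸ J) = 2)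
    (L : Set (MvPolynomial (Fin 4) ℂ))
    (hL1 : ∀ ℓ ∈ L, ℓ ∈ homogeneousSubmodule (Fin 4) ℂ 1)
    (hLdense : ∀ p : MvPolynomial (Fin 4) ℂ,
      (∀ ℓ ∈ L, eval (fun i : Fin 4 => coeff (Finsupp.single i 1) ℓ) p = 0) → p = 0)
    (hLreg : ∀ ℓ ∈ L, (∀ g : MvPolynomial (Fin 4) ℂ, ℓ * g ∈ I → g ∈ I) ∧
      (∀ g : MvPolynomial (Fin 4) ℂ, ℓ * g ∈ J → g ∈ J))
    (hLeq : ∀ ℓ ∈ L, ∃ N : ℕ, ∀ n : ℕ, N ≤ n →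
      Submodule.restrictScalars ℂ (I ⊔ Ideal.span {ℓ}) ⊓
          homogeneousSubmodule (Fin 4) ℂ n =
        Submodule.restrictScalars ℂ (J ⊔ Ideal.span {ℓ}) ⊓
          homogeneousSubmodule (Fin 4) ℂ n) :
    CMpart I = CMpart J := by
  exact stmt_12_general (by norm_num) (isHomogeneous_of_homogeneousComponent_mem hIhom)
    (isHomogeneous_of_homogeneousComponent_mem hJhom) hL1 hLdense
    fun ℓ hℓ ↦ eventually_atTop.2 (hLeq ℓ hℓ)
end
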